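/- Let X be uniformly distributed on [−π, π] and let m_D = span{φ_j : j = 0, …, 2l} be the space of trigonometric polynomials of degree at most l, of linear dimension D = 2l+1. If m_D satisfies the small-ball condition with constants (β₀, κ₀), then β₀ κ₀² ≤ 3^{1/4} √2 · D^{−3/4}; equivalently, (16/(β₀κ₀²))² σ² D x / n ≥ 256 σ² D^{5/2} x / (√(2√3) n) for all σ, x > 0 and n ≥ 1. -/

import Mathlib

open MeasureTheory

/-- The uniform probability distribution on `[-π, π]`. -/
noncomputable def unifSym : Measure ℝ :=
  (ENNReal.ofReal (2 * Real.pi))⁻¹ • (volume.restrict (Set.Icc (-Real.pi) Real.pi))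

/-- The trigonometric system `φ₀ ≡ 1`, `φ_{2k}(x) = √2 cos(kx)`,
`φ_{2k+1}(x) = √2 sin(kx)` for `k ≥ 1`. -/
noncomputable def trigSym (j : ℕ) (x : ℝ) : ℝ :=
  if j = 0 then 1
  else if Even j then Real.sqrt 2 * Real.cos ((j / 2 : ℕ) * x)
  else Real.sqrt 2 * Real.sin ((j / 2 : ℕ) * x)

/-- The `L²` norm with respect to a measure `μ`. -/
noncomputable def norm2 (μ : Measure ℝ) (f : ℝ → ℝ) : ℝ :=
  Real.sqrt (∫ x, f x ^ 2 ∂μ)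

/-!
The small-ball condition is tested on the Fejér kernel `F` of degree `l`, which is concentrated near
the origin: on `[-π, π]` one has `0 ≤ F x ≤ 1 / sin² (x / 2) ≤ 1 + 4 / x²`, so `{F ≥ T}` has
probability at most `2 / (π √(T - 1))`, whereas `‖F‖₂² = (l + 1) (2 (l + 1)² + 1) / 3` is of order
`D³ / 12`. With `T = κ₀ ‖F‖₂` this reads `β₀² (κ₀ ‖F‖₂ - 1) ≤ 4 / π²`. Testing on the constants
gives `κ₀ ≤ 1`, which turns it into `β₀² κ₀⁴ (‖F‖₂ - 1) ≤ 4 / π²` for `l ≥ 1`, and then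
`(β₀ κ₀²)⁴ D³ ≤ 3`, from which both inequalities follow.
-/

open Real Finset

section Orthonormal

variable {α ι : Type*} [MeasurableSpace α] [DecidableEq ι] {μ : Measure α}

theorem integral_sum_mul_sq_of_orthonormal {s : Finset ι} {e : ι → α → ℝ} (c : ι → ℝ)
    (hInt : ∀ i ∈ s, ∀ j ∈ s, Integrable (fun x => e i x * e j x) μ)
    (horth : ∀ i ∈ s, ∀ j ∈ s, ∫ x, e i x * e j x ∂μ = if i = j then 1 else 0) :
    ∫ x, (∑ i ∈ s, c i * e i x) ^ 2 ∂μ = ∑ i ∈ s, c i ^ 2 := by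
  have expand (x : α) : (∑ i ∈ s, c i * e i x) ^ 2 =
      ∑ i ∈ s, ∑ j ∈ s, c i * c j * (e i x * e j x) := by
    rw [sq, sum_mul_sum]
    exact sum_congr rfl fun i _ => sum_congr rfl fun j _ => by ring
  have hInt' : ∀ i ∈ s, ∀ j ∈ s, Integrable (fun x => c i * c j * (e i x * e j x)) μ :=
    fun i hi j hj => (hInt i hi j hj).const_mul _
  simp_rw [expand]
  rw [integral_finsetSum _ fun i hi => integrable_finsetSum _ (hInt' i hi)]
  refine sum_congr rfl fun i hi => ?_
  rw [integral_finsetSum _ (hInt' i hi), sum_eq_single_of_mem i hi]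
  · rw [integral_const_mul, horth i hi i hi, if_pos rfl, mul_one, sq]
  · intro j hj hji
    rw [integral_const_mul, horth i hi j hj, if_neg hji.symm, mul_zero]

end Orthonormal

section UniformMeasure

theorem unifSym_eq_cond : unifSym = ProbabilityTheory.cond volume (Set.Icc (-π) π) := by
  rw [unifSym, ProbabilityTheory.cond, Real.volume_Icc, sub_neg_eq_add, two_mul]

instance : IsProbabilityMeasure unifSym := by
  rw [unifSym_eq_cond]
  refine ProbabilityTheory.cond_isProbabilityMeasure_of_finite ?_ measure_Icc_lt_top.ne
  simp [Real.volume_Icc, pi_pos]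

theorem integral_unifSym (f : ℝ → ℝ) :
    ∫ x, f x ∂unifSym = (2 * π)⁻¹ * ∫ x in (-π)..π, f x := by
  rw [unifSym, integral_smul_measure, integral_Icc_eq_integral_Ioc,
    ← intervalIntegral.integral_of_le (neg_le_self pi_pos.le), ENNReal.toReal_inv,
    ENNReal.toReal_ofReal two_pi_pos.le, smul_eq_mul]

theorem integrable_unifSym_of_continuous {f : ℝ → ℝ} (hf : Continuous f) :
    Integrable f unifSym :=
  hf.integrableOn_Icc.smul_measure (by simp [pi_pos])

theorem unifSym_real_le_div_pi {S : Set ℝ} {w : ℝ} (hw : 0 ≤ w)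
    (hS : ∀ x ∈ S, |x| ≤ π → |x| ≤ w) : unifSym.real S ≤ w / π := by
  have hsub : Set.Icc (-π) π ∩ S ⊆ Set.Icc (-w) w :=
    fun x hx => abs_le.mp (hS x hx.2 (abs_le.mpr hx.1))
  calc unifSym.real S = (2 * π)⁻¹ * volume.real (Set.Icc (-π) π ∩ S) := by
        rw [measureReal_def, unifSym_eq_cond, ProbabilityTheory.cond_apply measurableSet_Icc,
          Real.volume_Icc, ENNReal.toReal_mul, ENNReal.toReal_inv, sub_neg_eq_add, ← two_mul,
          ENNReal.toReal_ofReal two_pi_pos.le, measureReal_def]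
    _ ≤ (2 * π)⁻¹ * volume.real (Set.Icc (-w) w) := by gcongr; exact measure_Icc_lt_top.ne
    _ = w / π := by
        rw [Real.volume_real_Icc_of_le (neg_le_self hw)]
        field_simp
        ring

end UniformMeasure

section CosineSystem

/-- The space `m_D` of real trigonometric polynomials of degree at most `l`, with `D = 2 l + 1`. -/
def trigPolynomials (l : ℕ) : Submodule ℝ (ℝ → ℝ) :=
  Submodule.span ℝ {f : ℝ → ℝ | ∃ j ≤ 2 * l, f = trigSym j}

theorem trigSym_zero : trigSym 0 = 1 := by
  ext x
  simp [trigSym]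

theorem trigSym_mem_trigPolynomials {j l : ℕ} (hj : j ≤ 2 * l) : trigSym j ∈ trigPolynomials l :=
  Submodule.subset_span ⟨j, hj, rfl⟩

theorem one_mem_trigPolynomials (l : ℕ) : 1 ∈ trigPolynomials l :=
  trigSym_zero ▸ trigSym_mem_trigPolynomials (Nat.zero_le _)

theorem trigSym_two_mul {k : ℕ} (hk : k ≠ 0) (x : ℝ) : trigSym (2 * k) x = √2 * cos (k * x) := by
  simp [trigSym, hk]

theorem continuous_trigSym (j : ℕ) : Continuous (trigSym j) := by
  unfold trigSym
  split_ifs <;> fun_prop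

theorem integral_cos_int_mul_unifSym (m : ℤ) :
    ∫ x, cos (m * x) ∂unifSym = if m = 0 then 1 else 0 := by
  split_ifs with hm
  · simp [hm]
  · have hm' : (m : ℝ) ≠ 0 := mod_cast hm
    rw [integral_unifSym, intervalIntegral.integral_comp_mul_left (fun x => cos x) hm',
      integral_cos]
    simp

theorem integral_cos_mul_cos_unifSym (j k : ℕ) :
    ∫ x, cos (j * x) * cos (k * x) ∂unifSym =
      ((if j = k then 1 else 0) + if j = 0 ∧ k = 0 then 1 else 0) / 2 := by
  have product_to_sum (x : ℝ) : cos (j * x) * cos (k * x) =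
      (cos ((j - k : ℤ) * x) + cos ((j + k : ℤ) * x)) / 2 := by
    push_cast
    rw [sub_mul, add_mul, ← two_mul_cos_mul_cos]
    ring
  simp_rw [product_to_sum]
  rw [integral_div, integral_add (integrable_unifSym_of_continuous (by fun_prop))
    (integrable_unifSym_of_continuous (by fun_prop)), integral_cos_int_mul_unifSym,
    integral_cos_int_mul_unifSym]
  congr 3 <;> apply propext <;> omega

theorem integral_trigSym_two_mul_mul_trigSym_two_mul (j k : ℕ) :
    ∫ x, trigSym (2 * j) x * trigSym (2 * k) x ∂unifSym = if j = k then 1 else 0 := by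
  have trigSym_eq (i : ℕ) (x : ℝ) :
      trigSym (2 * i) x = (if i = 0 then 1 else √2) * cos (i * x) := by
    split_ifs with hi
    · simp [hi, trigSym_zero]
    · exact trigSym_two_mul hi x
  simp_rw [trigSym_eq, fun x => mul_mul_mul_comm (if j = 0 then 1 else √2) (cos (j * x))]
  rw [integral_const_mul, integral_cos_mul_cos_unifSym]
  rcases eq_or_ne j k with rfl | hjk
  · split_ifs with hj <;> simp_all
  · have hjk₀ : ¬(j = 0 ∧ k = 0) := by omega
    rw [if_neg hjk, if_neg hjk₀, add_zero, zero_div, mul_zero]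

end CosineSystem

section FejerKernel

/-- The Dirichlet kernel `∑ |k| ≤ n, exp (i k x)`, in real form. -/
noncomputable def dirichletKernel (n : ℕ) (x : ℝ) : ℝ :=
  1 + 2 * ∑ k ∈ range n, cos ((k + 1 : ℕ) * x)

/-- The Fejér kernel of degree `l`, i.e. the sum (not the mean) of the Dirichlet kernels of degree
at most `l`; the test function for the small-ball condition. -/
noncomputable def fejerKernel (l : ℕ) (x : ℝ) : ℝ :=
  ∑ n ∈ range (l + 1), dirichletKernel n x

/-- The coefficient of `fejerKernel l` along the orthonormal function `trigSym (2 * k)`. -/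
noncomputable def fejerCoeff (l k : ℕ) : ℝ :=
  if k = 0 then l + 1 else √2 * (l + 1 - k)

theorem fejerCoeff_succ (l k : ℕ) : fejerCoeff l (k + 1) = √2 * (l - k) := by
  rw [fejerCoeff, if_neg k.succ_ne_zero, Nat.cast_succ, add_sub_add_right_eq_sub]

theorem dirichletKernel_mul_sin (n : ℕ) (x : ℝ) :
    dirichletKernel n x * sin (x / 2) = sin ((n + 1 / 2) * x) := by
  induction n with
  | zero => simp [dirichletKernel, div_eq_inv_mul]
  | succ n ih =>
    have product_to_sum : 2 * cos ((n + 1 : ℕ) * x) * sin (x / 2) =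
        sin (((n + 1 : ℕ) + 1 / 2) * x) - sin ((n + 1 / 2) * x) := by
      rw [sin_sub_sin]
      push_cast
      ring_nf
    calc dirichletKernel (n + 1) x * sin (x / 2)
        = dirichletKernel n x * sin (x / 2) + 2 * cos ((n + 1 : ℕ) * x) * sin (x / 2) := by
          rw [dirichletKernel, sum_range_succ, dirichletKernel]
          ring
      _ = sin (((n + 1 : ℕ) + 1 / 2) * x) := by rw [ih, product_to_sum]; ring

theorem dirichletKernel_mul_sin_sq (n : ℕ) (x : ℝ) :
    dirichletKernel n x * sin (x / 2) ^ 2 =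
      sin ((n + 1 : ℕ) * x / 2) ^ 2 - sin (n * x / 2) ^ 2 := by
  rw [sq, ← mul_assoc, dirichletKernel_mul_sin, sin_sq_eq_half_sub, sin_sq_eq_half_sub]
  have h := two_mul_sin_mul_sin ((n + 1 / 2) * x) (x / 2)
  rw [show (n + 1 / 2) * x - x / 2 = 2 * (n * x / 2) by ring,
    show (n + 1 / 2) * x + x / 2 = 2 * ((n + 1 : ℕ) * x / 2) by push_cast; ring] at h
  linarith

theorem fejerKernel_mul_sin_sq (l : ℕ) (x : ℝ) :
    fejerKernel l x * sin (x / 2) ^ 2 = sin ((l + 1 : ℕ) * x / 2) ^ 2 := by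
  simp_rw [fejerKernel, sum_mul, dirichletKernel_mul_sin_sq]
  rw [sum_range_sub fun n : ℕ => sin (n * x / 2) ^ 2]
  simp

theorem fejerKernel_eq_sum_cos (l : ℕ) (x : ℝ) :
    fejerKernel l x = l + 1 + 2 * ∑ k ∈ range l, (l - k) * cos ((k + 1 : ℕ) * x) := by
  induction l with
  | zero => simp [fejerKernel, dirichletKernel]
  | succ l ih =>
    have shift : ∑ k ∈ range (l + 1), ((l + 1 : ℕ) - k : ℝ) * cos ((k + 1 : ℕ) * x) =
        ∑ k ∈ range l, (l - k) * cos ((k + 1 : ℕ) * x) +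
          ∑ k ∈ range (l + 1), cos ((k + 1 : ℕ) * x) := by
      calc ∑ k ∈ range (l + 1), ((l + 1 : ℕ) - k : ℝ) * cos ((k + 1 : ℕ) * x)
          = ∑ k ∈ range (l + 1), (l - k) * cos ((k + 1 : ℕ) * x) +
              ∑ k ∈ range (l + 1), cos ((k + 1 : ℕ) * x) := by
            rw [← sum_add_distrib]
            exact sum_congr rfl fun k _ => by push_cast; ring
        _ = _ := by rw [sum_range_succ, sub_self, zero_mul, add_zero]
    rw [fejerKernel, sum_range_succ, ← fejerKernel, ih, dirichletKernel, shift]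
    push_cast
    ring

theorem fejerKernel_eq_sum_trigSym (l : ℕ) (x : ℝ) :
    fejerKernel l x = ∑ k ∈ range (l + 1), fejerCoeff l k * trigSym (2 * k) x := by
  rw [fejerKernel_eq_sum_cos, sum_range_succ', add_comm, mul_sum]
  congr 1
  · refine sum_congr rfl fun k _ => ?_
    rw [fejerCoeff_succ, trigSym_two_mul k.succ_ne_zero, mul_mul_mul_comm,
      mul_self_sqrt zero_le_two]
  · simp [fejerCoeff, trigSym_zero]

theorem fejerKernel_mem_trigPolynomials (l : ℕ) : fejerKernel l ∈ trigPolynomials l := by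
  have eq_sum : fejerKernel l = ∑ k ∈ range (l + 1), fejerCoeff l k • trigSym (2 * k) := by
    ext x
    simp [fejerKernel_eq_sum_trigSym]
  rw [eq_sum]
  exact Submodule.sum_mem _ fun k hk => Submodule.smul_mem _ _ <|
    trigSym_mem_trigPolynomials (Nat.mul_le_mul_left 2 (mem_range_succ_iff.mp hk))

theorem sum_fejerCoeff_sq (l : ℕ) :
    ∑ k ∈ range (l + 1), fejerCoeff l k ^ 2 = ((l + 1) * (2 * (l + 1) ^ 2 + 1) / 3 : ℝ) := by
  have sum_sq_sub (n : ℕ) (c : ℝ) : ∑ k ∈ range n, (c - k) ^ 2 =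
      n * c ^ 2 - c * n * (n - 1) + n * (n - 1) * (2 * n - 1) / 6 := by
    induction n with
    | zero => simp
    | succ n ih =>
      rw [sum_range_succ, ih]
      push_cast
      ring
  simp_rw [sum_range_succ', fejerCoeff_succ, mul_pow, sq_sqrt zero_le_two]
  rw [← mul_sum, sum_sq_sub, fejerCoeff, if_pos rfl]
  ring

theorem norm2_fejerKernel_sq (l : ℕ) :
    norm2 unifSym (fejerKernel l) ^ 2 = (l + 1) * (2 * (l + 1) ^ 2 + 1) / 3 := by
  rw [norm2, sq_sqrt (integral_nonneg fun x => sq_nonneg _)]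
  simp_rw [fejerKernel_eq_sum_trigSym]
  rw [integral_sum_mul_sq_of_orthonormal, sum_fejerCoeff_sq]
  · exact fun j _ k _ => integrable_unifSym_of_continuous
      ((continuous_trigSym _).mul (continuous_trigSym _))
  · exact fun j _ k _ => integral_trigSym_two_mul_mul_trigSym_two_mul j k

end FejerKernel

section Tail

theorem sq_le_one_add_sq_mul_sin_sq {u : ℝ} (hu : |u| ≤ π / 2) :
    u ^ 2 ≤ (1 + u ^ 2) * sin u ^ 2 := by
  obtain ⟨hu₁, hu₂⟩ := abs_le.mp hu
  have cos_le : cos u ≤ 1 / √(u ^ 2 + 1) :=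
    cos_le_one_div_sqrt_sq_add_one (by linarith [pi_pos]) (by linarith [pi_pos])
  have cos_sq_le : cos u ^ 2 ≤ 1 / (u ^ 2 + 1) := by
    calc cos u ^ 2 ≤ (1 / √(u ^ 2 + 1)) ^ 2 :=
          pow_le_pow_left₀ (cos_nonneg_of_mem_Icc ⟨by linarith, hu₂⟩) cos_le 2
      _ = 1 / (u ^ 2 + 1) := by rw [div_pow, one_pow, sq_sqrt (by positivity)]
  rw [le_div_iff₀ (by positivity)] at cos_sq_le
  rw [sin_sq]
  linarith

theorem sub_one_mul_sq_le_of_le_abs_fejerKernel {l : ℕ} {T x : ℝ} (hx : |x| ≤ π)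
    (hT : T ≤ |fejerKernel l x|) : (T - 1) * x ^ 2 ≤ 4 := by
  have hT_sin : T * sin (x / 2) ^ 2 ≤ 1 := by
    calc T * sin (x / 2) ^ 2 ≤ |fejerKernel l x| * sin (x / 2) ^ 2 := by gcongr
      _ = sin ((l + 1 : ℕ) * x / 2) ^ 2 := by
        rw [← abs_sq (sin (x / 2)), ← abs_mul, fejerKernel_mul_sin_sq, abs_sq]
      _ ≤ 1 := sin_sq_le_one _
  have hu : |x / 2| ≤ π / 2 := by
    rw [abs_div, abs_two]
    linarith
  rcases le_total T 1 with hT1 | hT1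
  · nlinarith [sq_nonneg x]
  · have key : T * (x / 2) ^ 2 ≤ 1 + (x / 2) ^ 2 :=
      calc T * (x / 2) ^ 2 ≤ T * ((1 + (x / 2) ^ 2) * sin (x / 2) ^ 2) := by
            gcongr
            exact sq_le_one_add_sq_mul_sin_sq hu
        _ = (1 + (x / 2) ^ 2) * (T * sin (x / 2) ^ 2) := by ring
        _ ≤ (1 + (x / 2) ^ 2) * 1 := by gcongr
        _ = 1 + (x / 2) ^ 2 := mul_one _
    linarith

theorem unifSym_real_le_abs_fejerKernel_sq_mul_le (l : ℕ) (T : ℝ) :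
    unifSym.real {x | T ≤ |fejerKernel l x|} ^ 2 * (T - 1) ≤ (2 / π) ^ 2 := by
  rcases le_or_gt T 1 with hT | hT
  · exact (mul_nonpos_of_nonneg_of_nonpos (sq_nonneg _) (sub_nonpos.mpr hT)).trans (sq_nonneg _)
  have hT' : 0 < T - 1 := sub_pos.mpr hT
  have tail : unifSym.real {x | T ≤ |fejerKernel l x|} ≤ 2 / √(T - 1) / π := by
    refine unifSym_real_le_div_pi (by positivity) fun x hx hxπ => ?_
    refine abs_le_of_sq_le_sq ?_ (by positivity)
    rw [div_pow, sq_sqrt hT'.le, le_div_iff₀ hT', mul_comm]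
    linarith [sub_one_mul_sq_le_of_le_abs_fejerKernel hxπ hx]
  calc unifSym.real {x | T ≤ |fejerKernel l x|} ^ 2 * (T - 1)
      ≤ (2 / √(T - 1) / π) ^ 2 * (T - 1) := by gcongr
    _ = (2 / π) ^ 2 := by
      rw [div_right_comm, div_pow, sq_sqrt hT'.le, div_mul_cancel₀ _ hT'.ne']

end Tail

/-- The small-ball condition with constants `κ`, `β` for a linear space `m` of functions of a random
variable of law `μ`. The functions are genuine functions, not almost-everywhere classes. -/
def SmallBall (μ : Measure ℝ) (m : Submodule ℝ (ℝ → ℝ)) (κ β : ℝ) : Prop :=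
  ∀ s ∈ m, β ≤ μ.real {x | κ * norm2 μ s ≤ |s x|}

namespace SmallBall

variable {μ : Measure ℝ} [IsProbabilityMeasure μ] {m : Submodule ℝ (ℝ → ℝ)} {κ β : ℝ}

theorem beta_le_one (h : SmallBall μ m κ β) : β ≤ 1 :=
  (h 0 m.zero_mem).trans measureReal_le_one

theorem kappa_le_one (h : SmallBall μ m κ β) (hβ : 0 < β) (one_mem : 1 ∈ m) : κ ≤ 1 := by
  by_contra! hκ
  have hle := h 1 one_mem
  simp only [norm2, Pi.one_apply, one_pow, integral_const, probReal_univ, smul_eq_mul, mul_one,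
    sqrt_one, abs_one, hκ.not_ge, Set.ofPred_false, measureReal_empty] at hle
  exact hβ.not_ge hle

end SmallBall

section FejerTest

/-- For `κ (M - 1) ≥ 1` the bound follows from `κ² (M - 1) ≤ κ M - 1`, otherwise from `b ≤ 1`. -/
theorem mul_pow_four_mul_sub_one_le {a b κ M : ℝ} (hb₀ : 0 ≤ b) (hb₁ : b ≤ 1) (hκ₀ : 0 ≤ κ)
    (hκ₁ : κ ≤ 1) (hM : 1 ≤ M) (ha : 1 ≤ a * (M - 1) ^ 3) (h : b * (κ * M - 1) ≤ a) :
    b * κ ^ 4 * (M - 1) ≤ a := by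
  have hM' : 0 ≤ M - 1 := sub_nonneg.mpr hM
  have ha₀ : 0 ≤ a := by
    by_contra! hneg
    linarith [mul_nonpos_of_nonpos_of_nonneg hneg.le (pow_nonneg hM' 3)]
  rcases le_total 1 (κ * (M - 1)) with hκM | hκM
  · have chord : κ ^ 2 * (M - 1) ≤ κ * M - 1 := by
      linarith [mul_nonneg (sub_nonneg.mpr hκ₁) (sub_nonneg.mpr hκM)]
    calc b * κ ^ 4 * (M - 1) ≤ b * κ ^ 2 * (M - 1) := by
          gcongr b * ?_ * _
          exact pow_le_pow_of_le_one hκ₀ hκ₁ (by norm_num)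
      _ = b * (κ ^ 2 * (M - 1)) := mul_assoc _ _ _
      _ ≤ b * (κ * M - 1) := mul_le_mul_of_nonneg_left chord hb₀
      _ ≤ a := h
  · calc b * κ ^ 4 * (M - 1) ≤ 1 * κ ^ 4 * (M - 1) * 1 := by rw [mul_one]; gcongr
      _ ≤ 1 * κ ^ 4 * (M - 1) * (a * (M - 1) ^ 3) := by gcongr
      _ = a * (κ * (M - 1)) ^ 4 := by ring
      _ ≤ a * 1 := by gcongr; exact pow_le_one₀ (by positivity) hκM
      _ = a := mul_one a

theorem dim_cube_le_mul_norm2_fejerKernel_sub_one_sq {l : ℕ} (hl : 1 ≤ l) :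
    (2 * l + 1 : ℝ) ^ 3 ≤ 18 * (norm2 unifSym (fejerKernel l) - 1) ^ 2 := by
  have hl' : (1 : ℝ) ≤ l := mod_cast hl
  set M := norm2 unifSym (fejerKernel l)
  have hM : M ^ 2 = (l + 1) * (2 * (l + 1) ^ 2 + 1) / 3 := norm2_fejerKernel_sq l
  calc (2 * l + 1 : ℝ) ^ 3 ≤ 12 * M ^ 2 - 36 := by rw [hM]; nlinarith
    _ ≤ 18 * (M - 1) ^ 2 := by linarith [sq_nonneg (M - 3)]

theorem twelve_fifths_le_norm2_fejerKernel {l : ℕ} (hl : 1 ≤ l) :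
    12 / 5 ≤ norm2 unifSym (fejerKernel l) := by
  have hl' : (1 : ℝ) ≤ l := mod_cast hl
  refine le_of_sq_le_sq ?_ (sqrt_nonneg _)
  calc (12 / 5 : ℝ) ^ 2 ≤ (1 + 1) * (2 * (1 + 1) ^ 2 + 1) / 3 := by norm_num
    _ ≤ (l + 1 : ℝ) * (2 * (l + 1) ^ 2 + 1) / 3 := by gcongr
    _ = norm2 unifSym (fejerKernel l) ^ 2 := (norm2_fejerKernel_sq l).symm

variable {l : ℕ} {κ β : ℝ}

theorem SmallBall.sq_mul_pow_four_mul_norm2_fejerKernel_sub_one_le (hl : 1 ≤ l) (hκ₀ : 0 ≤ κ)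
    (hβ₀ : 0 < β) (h : SmallBall unifSym (trigPolynomials l) κ β) :
    β ^ 2 * κ ^ 4 * (norm2 unifSym (fejerKernel l) - 1) ≤ (2 / π) ^ 2 := by
  set M := norm2 unifSym (fejerKernel l)
  have hM : 12 / 5 ≤ M := twelve_fifths_le_norm2_fejerKernel hl
  have hM_cube : 1 ≤ (2 / π) ^ 2 * (M - 1) ^ 3 := by
    have hM_sub : 7 / 5 ≤ M - 1 := by linarith
    calc (1 : ℝ) ≤ (2 / 3.15) ^ 2 * (7 / 5) ^ 3 := by norm_num
      _ ≤ (2 / π) ^ 2 * (M - 1) ^ 3 := by gcongr; exact pi_lt_d2.le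
  refine mul_pow_four_mul_sub_one_le (sq_nonneg β) (pow_le_one₀ hβ₀.le h.beta_le_one) hκ₀
    (h.kappa_le_one hβ₀ (one_mem_trigPolynomials l)) (by linarith) hM_cube ?_
  rcases le_total (κ * M) 1 with hκM | hκM
  · exact (mul_nonpos_of_nonneg_of_nonpos (sq_nonneg _) (sub_nonpos.mpr hκM)).trans (sq_nonneg _)
  · calc β ^ 2 * (κ * M - 1)
        ≤ unifSym.real {x | κ * M ≤ |fejerKernel l x|} ^ 2 * (κ * M - 1) := by
          have := sub_nonneg.mpr hκM
          gcongr
          exact h _ (fejerKernel_mem_trigPolynomials l)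
      _ ≤ (2 / π) ^ 2 := unifSym_real_le_abs_fejerKernel_sq_mul_le l _

theorem SmallBall.pow_four_mul_dim_cube_le_three (hκ₀ : 0 ≤ κ) (hβ₀ : 0 < β)
    (h : SmallBall unifSym (trigPolynomials l) κ β) :
    (β * κ ^ 2) ^ 4 * (2 * l + 1 : ℝ) ^ 3 ≤ 3 := by
  have hκ₁ : κ ≤ 1 := h.kappa_le_one hβ₀ (one_mem_trigPolynomials l)
  rcases Nat.eq_zero_or_pos l with rfl | hl
  · have hp : β * κ ^ 2 ≤ 1 := mul_le_one₀ h.beta_le_one (sq_nonneg κ) (pow_le_one₀ hκ₀ hκ₁)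
    have hp4 : (β * κ ^ 2) ^ 4 ≤ 1 := pow_le_one₀ (by positivity) hp
    norm_num
    linarith
  · set M := norm2 unifSym (fejerKernel l)
    have hM : 0 ≤ M - 1 := by linarith [twelve_fifths_le_norm2_fejerKernel hl]
    calc (β * κ ^ 2) ^ 4 * (2 * l + 1 : ℝ) ^ 3
        ≤ (β * κ ^ 2) ^ 4 * (18 * (M - 1) ^ 2) := by
          gcongr
          exact dim_cube_le_mul_norm2_fejerKernel_sub_one_sq hl
      _ = 18 * (β ^ 2 * κ ^ 4 * (M - 1)) ^ 2 := by ring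
      _ ≤ 18 * ((2 / π) ^ 2) ^ 2 := by
          gcongr
          exact h.sq_mul_pow_four_mul_norm2_fejerKernel_sub_one_le hl hκ₀ hβ₀
      _ ≤ 18 * ((2 / 3.14) ^ 2) ^ 2 := by gcongr; exact pi_gt_d2.le
      _ ≤ 3 := by norm_num

end FejerTest

section RealPowers

variable {p D c : ℝ}

theorem le_rpow_mul_rpow_of_pow_four_mul_cube_le (hD : 0 < D) (hc : 0 ≤ c)
    (h : p ^ 4 * D ^ 3 ≤ c) : p ≤ c ^ ((1 : ℝ) / 4) * D ^ (-(3 : ℝ) / 4) := by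
  refine le_of_pow_le_pow_left₀ four_ne_zero (by positivity) ?_
  calc p ^ 4 ≤ c / D ^ 3 := (le_div_iff₀ (by positivity)).mpr h
    _ = (c ^ ((1 : ℝ) / 4) * D ^ (-(3 : ℝ) / 4)) ^ 4 := by
      rw [mul_pow, ← rpow_mul_natCast hc, ← rpow_mul_natCast hD.le]
      norm_num [div_eq_mul_inv, rpow_neg hD.le]

theorem sq_mul_rpow_le_sqrt_of_pow_four_mul_cube_le (hD : 0 ≤ D) (h : p ^ 4 * D ^ 3 ≤ c) :
    p ^ 2 * D ^ ((3 : ℝ) / 2) ≤ √c := by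
  refine le_sqrt_of_sq_le ?_
  calc (p ^ 2 * D ^ ((3 : ℝ) / 2)) ^ 2 = p ^ 4 * D ^ 3 := by
        rw [mul_pow, ← pow_mul, ← rpow_mul_natCast hD]
        norm_num
    _ ≤ c := h

theorem mul_rpow_five_halves_div_le {r σ x n : ℝ} (hp : 0 < p) (hD : 0 < D) (hr : 0 < r)
    (hx : 0 ≤ x) (hn : 0 ≤ n) (h : p ^ 2 * D ^ ((3 : ℝ) / 2) ≤ r) :
    256 * σ ^ 2 * D ^ ((5 : ℝ) / 2) * x / (r * n) ≤ (16 / p) ^ 2 * σ ^ 2 * D * x / n := by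
  have hD52 : D ^ ((5 : ℝ) / 2) = D ^ ((3 : ℝ) / 2) * D := by
    rw [← rpow_add_one hD.ne']
    norm_num
  have hratio : D ^ ((3 : ℝ) / 2) / r ≤ 1 / p ^ 2 := by
    rw [div_le_div_iff₀ hr (by positivity)]
    linarith
  calc 256 * σ ^ 2 * D ^ ((5 : ℝ) / 2) * x / (r * n)
      = 256 * σ ^ 2 * D * x / n * (D ^ ((3 : ℝ) / 2) / r) := by rw [hD52]; ring
    _ ≤ 256 * σ ^ 2 * D * x / n * (1 / p ^ 2) := by gcongr
    _ = (16 / p) ^ 2 * σ ^ 2 * D * x / n := by ring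

end RealPowers

/-- Let `X` be uniform on `[-π, π]` and let
`m_D = span{φ_j : j = 0, …, 2l}`, `D = 2l + 1`. If `m_D` satisfies the small-ball
condition with constants `(β₀, κ₀)`, then `β₀ κ₀² ≤ 3^{1/4} √2 D^{-3/4}`;
equivalently `(16/(β₀κ₀²))² σ² D x / n ≥ 256 σ² D^{5/2} x / (√(2√3) n)` for all
`σ, x > 0` and `n ≥ 1`. -/
theorem fourier_small_ball_rate_lower_bound (l : ℕ) (κ₀ β₀ : ℝ)
    (hκ₀ : 0 < κ₀) (hβ₀ : 0 < β₀)
    (hSB : ∀ s ∈ Submodule.span ℝ {f : ℝ → ℝ | ∃ j ≤ 2 * l, f = trigSym j},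
      β₀ ≤ (unifSym {x | κ₀ * norm2 unifSym s ≤ |s x|}).toReal) :
    β₀ * κ₀ ^ 2 ≤ (3 : ℝ) ^ ((1 : ℝ) / 4) * Real.sqrt 2 *
        ((2 * l + 1 : ℕ) : ℝ) ^ (-(3 : ℝ) / 4) ∧
      ∀ σ x : ℝ, 0 < σ → 0 < x → ∀ n : ℕ, 1 ≤ n →
        256 * σ ^ 2 * ((2 * l + 1 : ℕ) : ℝ) ^ ((5 : ℝ) / 2) * x /
            (Real.sqrt (2 * Real.sqrt 3) * n) ≤
          (16 / (β₀ * κ₀ ^ 2)) ^ 2 * σ ^ 2 * ((2 * l + 1 : ℕ) : ℝ) * x / n := by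
  have hbound : (β₀ * κ₀ ^ 2) ^ 4 * ((2 * l + 1 : ℕ) : ℝ) ^ 3 ≤ 3 := by
    push_cast
    exact SmallBall.pow_four_mul_dim_cube_le_three hκ₀.le hβ₀ hSB
  have hp : 0 < β₀ * κ₀ ^ 2 := by positivity
  have hD : 0 < ((2 * l + 1 : ℕ) : ℝ) := by positivity
  constructor
  · calc β₀ * κ₀ ^ 2 ≤ 3 ^ ((1 : ℝ) / 4) * 1 * ((2 * l + 1 : ℕ) : ℝ) ^ (-(3 : ℝ) / 4) := by
          rw [mul_one]
          exact le_rpow_mul_rpow_of_pow_four_mul_cube_le hD zero_le_three hbound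
      _ ≤ _ := by gcongr; exact one_le_sqrt.mpr one_le_two
  · intro σ x _ hx n _
    refine mul_rpow_five_halves_div_le hp hD (by positivity) hx.le n.cast_nonneg ?_
    refine sq_mul_rpow_le_sqrt_of_pow_four_mul_cube_le hD.le (hbound.trans ?_)
    linarith [show 3 / 2 ≤ √3 from le_sqrt_of_sq_le (by norm_num)]
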